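/- arXiv:1701.00787 — 2 statements merged into one kernel-verified Lean document; each statement's English description precedes it below -/
import Mathlib

section
/- Let α, β ∈ ℕ (nonnegative integers) with max{α, β} > 0, and let δ be a real number with δ ≥ α + 1. Then for every n ∈ ℕ (n ≥ 0) and every t ∈ (0, π], the integral F_n^{(α,β),δ}(t) is strictly positive. -/
/-!
Let `f_{n,α,β}(θ) = P_n^{(α-1/2,β-1/2)}(cos θ) sin(θ/2)^{2α} cos(θ/2)^{2β}` and let `J` denote
integration from `0`. Repeated integration by parts expresses `F_n^{(α,β),δ}(t)` with `δ ≥ α + 1` as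
a positive average of `J^{α+2} f_{n,α,β}`, so it suffices that this function is positive.

The contiguous relations of the Jacobi polynomials expand `f_{n,α+1,β}` and `f_{n,α,β+1}` in
`f_{n,α,β}` and `f_{n+1,α,β}`, with positive coefficients for `f_{n,α,β+1}`; hence positivity passes
from `β` to `β + 1`. For `β = 0` the start is `f_{n,0,0}`, a positive multiple of `cos nθ`, whose
double integral `κ_n(θ) = (1 - cos nθ) / n²` (or `θ² / 2` if `n = 0`) is nonnegative. The relations
yield inductively `f'' + n² f = (α + 1)(n + 1) f_{n+1,α,0}` and `f(0) = f'(0) = 0` for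
`f = f_{n,α+1,0}`. Solving this equation, `J^{α+3} f_{n,α+1,0}` is a positive multiple of the
convolution of `κ_n` with `J^{α+2} f_{n+1,α,0}`. For `α = 0` the functions `κ_n` and `κ_{n+1}` have
no common zero in `(0, 2π)`, which makes the step from `β = 0` to `β = 1` strict.
-/

open MeasureTheory Real Set

/-- Generalized binomial coefficient `C(u, v) = Γ(u+1) / (Γ(v+1) Γ(u-v+1))`. -/
noncomputable def genBinom (u v : ℝ) : ℝ :=
  Real.Gamma (u + 1) / (Real.Gamma (v + 1) * Real.Gamma (u - v + 1))

/-- Jacobi polynomial `P_n^{(a,b)}(x)`. -/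
noncomputable def jacobiP (n : ℕ) (a b x : ℝ) : ℝ :=
  ∑ k ∈ Finset.range (n + 1),
    genBinom ((n : ℝ) + a) ((n : ℝ) - (k : ℝ)) * genBinom ((n : ℝ) + b) (k : ℝ) *
      ((x - 1) / 2) ^ k * ((x + 1) / 2) ^ (n - k)

/-- `F_n^{(α,β),δ}(t)`. -/
noncomputable def FJ (n : ℕ) (α β δ t : ℝ) : ℝ :=
  ∫ θ in (0:ℝ)..t, (t - θ) ^ δ * jacobiP n (α - 1/2) (β - 1/2) (Real.cos θ) *
    (Real.sin (θ / 2)) ^ (2 * α) * (Real.cos (θ / 2)) ^ (2 * β)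

section Jacobi

open Finset.HasAntidiagonal (antidiagonal mem_antidiagonal)

/-- The `i`-th term of the Bessel–Clifford series `∑ i, z ^ i / (i! Γ(i + a + 1))` with
parameter `a`. -/
noncomputable def cliffordTerm (a z : ℝ) (i : ℕ) : ℝ :=
  z ^ i / (i.factorial * Gamma (i + a + 1))

/-- The part of degree `n` of the product of the Bessel–Clifford series with parameters `a` and `b`
at `z` and `w`. Up to a factor depending only on `n`, `a` and `b`, it is the Jacobi polynomial
`P_n^{(a,b)}` at the point `x` with `z = (x - 1) / 2` and `w = (x + 1) / 2`. -/
noncomputable def cliffordCauchyProd (n : ℕ) (a b z w : ℝ) : ℝ :=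
  ∑ p ∈ antidiagonal n, cliffordTerm a z p.1 * cliffordTerm b w p.2

lemma natCast_add_add_one_pos {a : ℝ} (ha : -1 < a) (n : ℕ) : 0 < (n : ℝ) + a + 1 := by
  linarith [n.cast_nonneg (α := ℝ)]

lemma Gamma_natCast_succ_add_add_one {a : ℝ} (ha : -1 < a) (n : ℕ) :
    Gamma ((n + 1 : ℕ) + a + 1) = (n + a + 1) * Gamma (n + a + 1) := by
  rw [← Gamma_add_one (natCast_add_add_one_pos ha n).ne']
  push_cast
  ring_nf

lemma mul_cliffordTerm_add_one (a z : ℝ) (i : ℕ) :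
    z * cliffordTerm (a + 1) z i = (i + 1 : ℕ) * cliffordTerm a z (i + 1) := by
  have hΓ : (i : ℝ) + (a + 1) + 1 = (i + 1 : ℕ) + a + 1 := by push_cast; ring
  have hi : ((i + 1 : ℕ) : ℝ) ≠ 0 := by positivity
  rw [cliffordTerm, cliffordTerm, hΓ, Nat.factorial_succ, Nat.cast_mul, pow_succ', mul_assoc,
    ← mul_div_assoc, ← mul_div_assoc, mul_div_mul_left _ _ hi]

lemma mul_cliffordTerm {a : ℝ} (ha : -1 < a) (z : ℝ) (i : ℕ) :
    z * cliffordTerm a z i = (i + 1 : ℕ) * ((i + 1 : ℕ) + a) * cliffordTerm a z (i + 1) := by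
  have hpos := natCast_add_add_one_pos ha i
  have hΓ := (Gamma_pos_of_pos hpos).ne'
  have hi : ((i + 1 : ℕ) : ℝ) ≠ 0 := by positivity
  rw [cliffordTerm, cliffordTerm, Gamma_natCast_succ_add_add_one ha, Nat.factorial_succ]
  push_cast at hi ⊢
  field_simp
  ring

lemma mul_cliffordCauchyProd_add_one (n : ℕ) (a b z w : ℝ) :
    z * cliffordCauchyProd n (a + 1) b z w =
      ∑ p ∈ antidiagonal (n + 1), p.1 * (cliffordTerm a z p.1 * cliffordTerm b w p.2) := by
  simp only [cliffordCauchyProd, Finset.Nat.sum_antidiagonal_succ, Finset.mul_sum, Nat.cast_zero,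
    zero_mul, zero_add, ← mul_assoc, mul_cliffordTerm_add_one]

lemma mul_left_cliffordCauchyProd (n : ℕ) {a : ℝ} (ha : -1 < a) (b z w : ℝ) :
    z * cliffordCauchyProd n a b z w =
      ∑ p ∈ antidiagonal (n + 1),
        p.1 * (p.1 + a) * (cliffordTerm a z p.1 * cliffordTerm b w p.2) := by
  simp only [cliffordCauchyProd, Finset.Nat.sum_antidiagonal_succ, Finset.mul_sum, Nat.cast_zero,
    zero_mul, zero_add, ← mul_assoc, mul_cliffordTerm ha]

lemma mul_right_cliffordCauchyProd (n : ℕ) (a : ℝ) {b : ℝ} (hb : -1 < b) (z w : ℝ) :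
    w * cliffordCauchyProd n a b z w =
      ∑ p ∈ antidiagonal (n + 1),
        p.2 * (p.2 + b) * (cliffordTerm a z p.1 * cliffordTerm b w p.2) := by
  simp only [cliffordCauchyProd, Finset.Nat.sum_antidiagonal_succ', Finset.mul_sum, Nat.cast_zero,
    zero_mul, mul_zero, zero_add, mul_left_comm _ (cliffordTerm a z _), mul_cliffordTerm hb]

lemma cliffordCauchyProd_contiguous (n : ℕ) {a b : ℝ} (ha : -1 < a) (hb : -1 < b) (z w : ℝ) :
    (2 * n + a + b + 2) * (z * cliffordCauchyProd n (a + 1) b z w) =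
      (n + 1) * ((n + b + 1) * cliffordCauchyProd (n + 1) a b z w) -
        (w * cliffordCauchyProd n a b z w - z * cliffordCauchyProd n a b z w) := by
  rw [mul_cliffordCauchyProd_add_one, mul_left_cliffordCauchyProd n ha,
    mul_right_cliffordCauchyProd n a hb]
  simp only [cliffordCauchyProd, Finset.mul_sum, ← Finset.sum_sub_distrib]
  refine Finset.sum_congr rfl fun p hp => ?_
  have hp : (p.1 : ℝ) + p.2 = n + 1 := mod_cast mem_antidiagonal.1 hp
  rw [← eq_sub_iff_add_eq'] at hp
  rw [hp]
  ring

lemma jacobiP_eq_cliffordCauchyProd (n : ℕ) (a b x : ℝ) :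
    jacobiP n a b x = Gamma (n + a + 1) * Gamma (n + b + 1) *
      cliffordCauchyProd n a b ((x - 1) / 2) ((x + 1) / 2) := by
  rw [jacobiP, cliffordCauchyProd, Finset.Nat.sum_antidiagonal_eq_sum_range_succ_mk,
    Finset.mul_sum]
  refine Finset.sum_congr rfl fun k hk => ?_
  have hkn : k ≤ n := Finset.mem_range_succ_iff.1 hk
  rw [genBinom, genBinom, cliffordTerm, cliffordTerm, ← Nat.cast_sub hkn,
    Gamma_nat_eq_factorial, Gamma_nat_eq_factorial, Nat.cast_sub hkn,
    show (n : ℝ) + a - (n - k) + 1 = k + a + 1 by ring,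
    show (n : ℝ) + b - k + 1 = n - k + b + 1 by ring]
  simp only [div_eq_mul_inv, mul_inv]
  ring

lemma jacobiP_neg (n : ℕ) (a b x : ℝ) : jacobiP n a b (-x) = (-1) ^ n * jacobiP n b a x := by
  rw [jacobiP, jacobiP, ← Finset.sum_range_reflect, Finset.mul_sum]
  refine Finset.sum_congr rfl fun k hk => ?_
  have hkn : k ≤ n := Finset.mem_range_succ_iff.1 hk
  rw [Nat.add_sub_cancel, Nat.sub_sub_self hkn, Nat.cast_sub hkn, sub_sub_cancel,
    show (-x - 1) / 2 = -1 * ((x + 1) / 2) by ring, show (-x + 1) / 2 = -1 * ((x - 1) / 2) by ring,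
    mul_pow, mul_pow, ← Nat.sub_add_cancel hkn, pow_add (-1 : ℝ), Nat.add_sub_cancel]
  ring

lemma one_sub_mul_jacobiP_add_one_left (n : ℕ) {a b : ℝ} (ha : -1 < a) (hb : -1 < b) (x : ℝ) :
    (2 * n + a + b + 2) * ((1 - x) / 2 * jacobiP n (a + 1) b x) =
      (n + a + 1) * jacobiP n a b x - (n + 1) * jacobiP (n + 1) a b x := by
  have hΓ : Gamma (n + (a + 1) + 1) = (n + a + 1) * Gamma (n + a + 1) := by
    rw [← Gamma_natCast_succ_add_add_one ha]
    push_cast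
    ring_nf
  simp only [jacobiP_eq_cliffordCauchyProd, Gamma_natCast_succ_add_add_one ha,
    Gamma_natCast_succ_add_add_one hb, hΓ]
  linear_combination -((n + a + 1) * Gamma (n + a + 1) * Gamma (n + b + 1)) *
    cliffordCauchyProd_contiguous n ha hb ((x - 1) / 2) ((x + 1) / 2)

lemma one_add_mul_jacobiP_add_one_right (n : ℕ) {a b : ℝ} (ha : -1 < a) (hb : -1 < b) (x : ℝ) :
    (2 * n + a + b + 2) * ((1 + x) / 2 * jacobiP n a (b + 1) x) =
      (n + b + 1) * jacobiP n a b x + (n + 1) * jacobiP (n + 1) a b x := by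
  have h := one_sub_mul_jacobiP_add_one_left n hb ha (-x)
  simp only [jacobiP_neg, pow_succ] at h
  refine mul_left_cancel₀ (pow_ne_zero n (neg_ne_zero.2 one_ne_zero) : (-1 : ℝ) ^ n ≠ 0) ?_
  linear_combination h

end Jacobi

section Chebyshev

lemma sum_range_two_mul_add_one {M : Type*} [AddCommMonoid M] (f : ℕ → M) (n : ℕ) :
    ∑ k ∈ Finset.range (2 * n + 1), f k =
      ∑ i ∈ Finset.range (n + 1), f (2 * i) + ∑ i ∈ Finset.range n, f (2 * i + 1) := by
  induction n with
  | zero => simp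
  | succ n ih =>
    rw [mul_add_one, Finset.sum_range_succ, Finset.sum_range_succ, ih,
      Finset.sum_range_succ _ (n + 1), Finset.sum_range_succ (fun i => f (2 * i + 1)) n,
      mul_add_one, add_assoc, add_comm (f (2 * n + 1)), add_add_add_comm]

lemma add_pow_add_sub_pow_two_mul {R : Type*} [CommRing R] (x y : R) (n : ℕ) :
    (x + y) ^ (2 * n) + (x - y) ^ (2 * n) =
      2 * ∑ i ∈ Finset.range (n + 1),
        (2 * n).choose (2 * i) * ((y ^ 2) ^ i * (x ^ 2) ^ (n - i)) := by
  rw [sub_eq_add_neg, add_comm x, add_comm x, add_pow, add_pow, ← Finset.sum_add_distrib,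
    sum_range_two_mul_add_one, Finset.mul_sum, add_eq_left.2]
  · refine Finset.sum_congr rfl fun i _ => ?_
    rw [(even_two_mul i).neg_pow, ← Nat.mul_sub, pow_mul, pow_mul]
    ring
  · refine Finset.sum_eq_zero fun i _ => ?_
    rw [(odd_two_mul_add_one i).neg_pow]
    ring

lemma cos_two_mul_natCast_mul (n : ℕ) (φ : ℝ) :
    cos (2 * n * φ) = ∑ i ∈ Finset.range (n + 1),
      (2 * n).choose (2 * i) * ((-sin φ ^ 2) ^ i * (cos φ ^ 2) ^ (n - i)) := by
  have hexp : ∀ ψ : ℂ, Complex.exp (2 * n * ψ * Complex.I) =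
      (Complex.cos ψ + Complex.sin ψ * Complex.I) ^ (2 * n) := fun ψ => by
    rw [← Complex.exp_mul_I, ← Complex.exp_nat_mul]
    push_cast
    ring_nf
  have hneg := hexp (-φ)
  rw [Complex.cos_neg, Complex.sin_neg, neg_mul, ← sub_eq_add_neg] at hneg
  apply Complex.ofReal_injective
  push_cast
  rw [Complex.cos, hexp, ← mul_neg, hneg, add_pow_add_sub_pow_two_mul, mul_pow, Complex.I_sq,
    mul_neg_one, mul_div_cancel_left₀ _ two_ne_zero]

lemma factorial_mul_Gamma_natCast_add_half (i : ℕ) :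
    i.factorial * Gamma (i + 1 / 2) * 4 ^ i = (2 * i).factorial * √π := by
  have h := Gamma_mul_Gamma_add_half (i + 1 / 2)
  rw [show (i : ℝ) + 1 / 2 + 1 / 2 = i + 1 by ring,
    show 2 * ((i : ℝ) + 1 / 2) = (2 * i : ℕ) + 1 by push_cast; ring, Gamma_nat_eq_factorial,
    Gamma_nat_eq_factorial, sub_add_cancel_right, rpow_neg zero_le_two, rpow_natCast, pow_mul] at h
  rw [mul_comm (i.factorial : ℝ), h, show (4 : ℝ) = 2 ^ 2 by norm_num]
  field_simp

lemma cliffordTerm_neg_half (z : ℝ) (i : ℕ) :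
    cliffordTerm (-1 / 2) z i = (4 * z) ^ i / ((2 * i).factorial * √π) := by
  rw [← factorial_mul_Gamma_natCast_add_half, cliffordTerm,
    show (i : ℝ) + -1 / 2 + 1 = i + 1 / 2 by ring, mul_comm (4 : ℝ), mul_pow,
    mul_div_mul_right _ _ (by positivity)]

lemma sin_half_sq (θ : ℝ) : sin (θ / 2) ^ 2 = (1 - cos θ) / 2 := by
  rw [sin_sq_eq_half_sub, mul_div_cancel₀ _ two_ne_zero]
  ring

lemma cos_half_sq (θ : ℝ) : cos (θ / 2) ^ 2 = (1 + cos θ) / 2 := by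
  rw [cos_sq, mul_div_cancel₀ _ two_ne_zero]
  ring

lemma jacobiP_neg_half_neg_half_cos (n : ℕ) (θ : ℝ) :
    jacobiP n (-1 / 2) (-1 / 2) (cos θ) = genBinom (n - 1 / 2) n * cos (n * θ) := by
  have hz : (cos θ - 1) / 2 = -sin (θ / 2) ^ 2 := by rw [sin_half_sq]; ring
  have hw : (cos θ + 1) / 2 = cos (θ / 2) ^ 2 := by rw [cos_half_sq]; ring
  rw [jacobiP_eq_cliffordCauchyProd, hz, hw, show (n : ℝ) * θ = 2 * n * (θ / 2) by ring,
    cos_two_mul_natCast_mul, cliffordCauchyProd,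
    Finset.Nat.sum_antidiagonal_eq_sum_range_succ_mk, Finset.mul_sum, Finset.mul_sum]
  refine Finset.sum_congr rfl fun k hk => ?_
  have hkn : k ≤ n := Finset.mem_range_succ_iff.1 hk
  have hΓ : Gamma (n + 1 / 2) = (2 * n).factorial * √π / (n.factorial * 4 ^ n) := by
    rw [← factorial_mul_Gamma_natCast_add_half]
    field_simp
  rw [cliffordTerm_neg_half, cliffordTerm_neg_half, genBinom, Nat.cast_choose ℝ (by lia),
    ← Nat.mul_sub, show (n : ℝ) + -1 / 2 + 1 = n + 1 / 2 by ring,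
    show (n : ℝ) - 1 / 2 + 1 = n + 1 / 2 by ring, show (n : ℝ) - 1 / 2 - n + 1 = 1 / 2 by ring,
    Gamma_one_half_eq, Gamma_nat_eq_factorial, mul_pow, mul_pow, hΓ,
    show (4 : ℝ) ^ n = 4 ^ k * 4 ^ (n - k) by rw [← pow_add, Nat.add_sub_cancel' hkn]]
  field_simp

lemma genBinom_pos {u v : ℝ} (hv : -1 < v) (huv : v < u + 1) (hu : -1 < u) : 0 < genBinom u v :=
  div_pos (Gamma_pos_of_pos (by linarith))
    (mul_pos (Gamma_pos_of_pos (by linarith)) (Gamma_pos_of_pos (by linarith)))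

end Chebyshev

section Volterra

/-- The Volterra operator `x ↦ ∫ s in 0..t, x s` on the continuous functions on `ℝ`. -/
noncomputable def volterra : Module.End ℝ C(ℝ, ℝ) where
  toFun x := ⟨fun t => ∫ s in (0 : ℝ)..t, x s,
    intervalIntegral.continuous_primitive (fun a b => x.continuous.intervalIntegrable a b) 0⟩
  map_add' x y := by
    ext t
    exact intervalIntegral.integral_add (x.continuous.intervalIntegrable _ _)
      (y.continuous.intervalIntegrable _ _)
  map_smul' r x := by
    ext t
    exact intervalIntegral.integral_smul r x

lemma volterra_apply (x : C(ℝ, ℝ)) (t : ℝ) : volterra x t = ∫ s in (0 : ℝ)..t, x s := rfl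

lemma volterra_apply_zero (x : C(ℝ, ℝ)) : volterra x 0 = 0 := intervalIntegral.integral_same

lemma hasDerivAt_volterra (x : C(ℝ, ℝ)) (t : ℝ) : HasDerivAt (volterra x) (x t) t :=
  x.continuous.integral_hasStrictDerivAt 0 t |>.hasDerivAt

lemma volterra_eq_of_hasDerivAt {x y : C(ℝ, ℝ)} (h0 : x 0 = 0) (h : ∀ t, HasDerivAt x (y t) t) :
    volterra y = x := by
  ext t
  rw [volterra_apply, intervalIntegral.integral_eq_sub_of_hasDerivAt (fun s _ => h s)
    (y.continuous.intervalIntegrable _ _), h0, sub_zero]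

lemma volterra_pow_succ_apply (m : ℕ) (x : C(ℝ, ℝ)) :
    (volterra ^ (m + 1)) x = volterra ((volterra ^ m) x) := by
  rw [pow_succ', Module.End.mul_apply]

lemma volterra_pow_volterra (m : ℕ) (x : C(ℝ, ℝ)) :
    (volterra ^ m) (volterra x) = volterra ((volterra ^ m) x) := by
  rw [← volterra_pow_succ_apply, pow_succ, Module.End.mul_apply]

/-- The value at `t` of the convolution of `g` and `x` on the half-line, as a bilinear form in `g`
and `x`. -/
noncomputable def volterraConv (t : ℝ) : C(ℝ, ℝ) →ₗ[ℝ] C(ℝ, ℝ) →ₗ[ℝ] ℝ :=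
  LinearMap.mk₂ ℝ (fun g x => ∫ s in (0 : ℝ)..t, g (t - s) * x s)
    (fun g₁ g₂ x => by
      simp only [ContinuousMap.add_apply, add_mul]
      exact intervalIntegral.integral_add (Continuous.intervalIntegrable (by fun_prop) _ _)
        (Continuous.intervalIntegrable (by fun_prop) _ _))
    (fun r g x => by
      simp only [ContinuousMap.smul_apply, smul_eq_mul, mul_assoc,
        intervalIntegral.integral_const_mul])
    (fun g x₁ x₂ => by
      simp only [ContinuousMap.add_apply, mul_add]
      exact intervalIntegral.integral_add (Continuous.intervalIntegrable (by fun_prop) _ _)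
        (Continuous.intervalIntegrable (by fun_prop) _ _))
    (fun r g x => by
      simp only [ContinuousMap.smul_apply, smul_eq_mul, mul_left_comm _ r,
        intervalIntegral.integral_const_mul])

lemma volterraConv_apply (t : ℝ) (g x : C(ℝ, ℝ)) :
    volterraConv t g x = ∫ s in (0 : ℝ)..t, g (t - s) * x s := rfl

lemma volterraConv_one (t : ℝ) (x : C(ℝ, ℝ)) : volterraConv t 1 x = volterra x t := by
  simp [volterraConv_apply, volterra_apply]

lemma volterraConv_volterra_right (t : ℝ) (g x : C(ℝ, ℝ)) :
    volterraConv t g (volterra x) = volterraConv t (volterra g) x := by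
  have hderiv : ∀ s, HasDerivAt (fun s => volterra g (t - s)) (-g (t - s)) s :=
    fun s => (hasDerivAt_volterra g (t - s)).comp_const_sub t s
  have hparts := intervalIntegral.integral_mul_deriv_eq_deriv_mul (a := 0) (b := t)
    (fun s _ => hderiv s) (fun s _ => hasDerivAt_volterra x s)
    (Continuous.intervalIntegrable (by fun_prop) _ _) (x.continuous.intervalIntegrable _ _)
  simpa [volterraConv_apply, volterra_apply_zero] using hparts.symm

lemma intervalIntegral_pos_of_ae_pos_on {f : ℝ → ℝ} {a b : ℝ}
    (hf : IntervalIntegrable f volume a b) (hpos : ∀ᵐ s, s ∈ Ioo a b → 0 < f s) (hab : a < b) :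
    0 < ∫ s in a..b, f s := by
  have hnonneg : 0 ≤ᵐ[volume.restrict (uIoc a b)] f := by
    rw [uIoc_of_le hab.le, ← restrict_Ioo_eq_restrict_Ioc, Filter.EventuallyLE,
      ae_restrict_iff' measurableSet_Ioo]
    exact hpos.mono fun s hs hmem => (hs hmem).le
  rw [intervalIntegral.integral_pos_iff_support_of_nonneg_ae' hnonneg hf]
  refine ⟨hab, ((Measure.measure_Ioo_pos _).2 hab).trans_le (measure_mono_ae ?_)⟩
  filter_upwards [hpos] with s hs hmem
  exact ⟨(hs hmem).ne', Ioo_subset_Ioc_self hmem⟩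

lemma volterraConv_pos {g x : C(ℝ, ℝ)} (hg : ∀ᵐ s, 0 < s → 0 < g s) (hx : ∀ᵐ s, 0 < s → 0 < x s)
    {t : ℝ} (ht : 0 < t) : 0 < volterraConv t g x := by
  refine intervalIntegral_pos_of_ae_pos_on (Continuous.intervalIntegrable (by fun_prop) _ _) ?_ ht
  have hg' : ∀ᵐ s, 0 < t - s → 0 < g (t - s) :=
    (volume.measurePreserving_sub_left t).quasiMeasurePreserving.ae hg
  filter_upwards [hg', hx] with s hgs hxs hs
  exact mul_pos (hgs (sub_pos.2 hs.2)) (hxs hs.1)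

end Volterra

section Oscillator

/-- `t ↦ cos (k t)`, the solution of `y'' + k² y = 0`, `y(0) = 1`, `y'(0) = 0`. -/
noncomputable def cosMap (k : ℝ) : C(ℝ, ℝ) := ⟨fun t => cos (k * t), by fun_prop⟩

lemma cosMap_apply (k t : ℝ) : cosMap k t = cos (k * t) := rfl

lemma cosMap_add_sq_smul_volterra_volterra (k : ℝ) :
    cosMap k + k ^ 2 • volterra (volterra (cosMap k)) = 1 := by
  let sinMap : C(ℝ, ℝ) := ⟨fun t => sin (k * t), by fun_prop⟩
  have hsin : volterra (k • cosMap k) = sinMap := by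
    refine volterra_eq_of_hasDerivAt (by simp [sinMap]) fun t => ?_
    simpa [sinMap, cosMap_apply, mul_comm] using ((hasDerivAt_id t).const_mul k).sin
  have hcos : volterra (k • sinMap) = 1 - cosMap k := by
    refine volterra_eq_of_hasDerivAt (by simp [cosMap_apply]) fun t => ?_
    change HasDerivAt (fun t => 1 - cos (k * t)) (k * sin (k * t)) t
    simpa [mul_comm] using ((hasDerivAt_id t).const_mul k).cos.const_sub 1
  rw [← hsin, map_smul, map_smul, map_smul, smul_smul, ← pow_two] at hcos
  rw [hcos, add_sub_cancel]

lemma volterra_volterra_cosMap_apply (k t : ℝ) :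
    volterra (volterra (cosMap k)) t = t ^ 2 / 2 * sinc (k * t / 2) ^ 2 := by
  rcases eq_or_ne k 0 with rfl | hk
  · have hone : cosMap 0 = 1 := by ext; simp [cosMap_apply]
    simp [hone, volterra_apply]
  rcases eq_or_ne t 0 with rfl | ht
  · simp [volterra_apply_zero]
  have h := DFunLike.congr_fun (cosMap_add_sq_smul_volterra_volterra k) t
  simp only [ContinuousMap.add_apply, ContinuousMap.smul_apply, smul_eq_mul,
    ContinuousMap.one_apply, cosMap_apply] at h
  have hcos : cos (k * t) = 1 - 2 * sin (k * t / 2) ^ 2 := by rw [sin_half_sq]; ring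
  rw [hcos] at h
  rw [sinc_of_ne_zero (by positivity)]
  generalize sin (k * t / 2) = S at h ⊢
  field_simp
  linear_combination h

lemma sin_eq_zero_of_sinc_eq_zero {x : ℝ} (h : sinc x = 0) : sin x = 0 := by
  rcases eq_or_ne x 0 with rfl | hx
  · exact sin_zero
  · simpa [sinc_of_ne_zero hx, hx] using h

lemma volterra_volterra_cosMap_nonneg (k t : ℝ) : 0 ≤ volterra (volterra (cosMap k)) t := by
  rw [volterra_volterra_cosMap_apply]
  positivity

lemma volterra_volterra_cosMap_pos_iff {k t : ℝ} (ht : t ≠ 0) :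
    0 < volterra (volterra (cosMap k)) t ↔ sinc (k * t / 2) ≠ 0 := by
  rw [volterra_volterra_cosMap_apply, mul_pos_iff_of_pos_left (by positivity), sq_pos_iff]

lemma ae_volterra_volterra_cosMap_pos (k : ℝ) :
    ∀ᵐ t, 0 < t → 0 < volterra (volterra (cosMap k)) t := by
  have hcount : (range fun m : ℤ => 2 * (m * π) / k).Countable := countable_range _
  filter_upwards [hcount.ae_notMem volume] with t hnot ht
  rw [volterra_volterra_cosMap_pos_iff ht.ne']
  intro hsinc
  obtain ⟨m, hm⟩ := sin_eq_zero_iff.1 (sin_eq_zero_of_sinc_eq_zero hsinc)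
  have hk : k ≠ 0 := by
    rintro rfl
    simp at hsinc
  refine hnot ⟨m, ?_⟩
  simp only [hm]
  field_simp

lemma volterra_volterra_cosMap_pos_or_add_one_pos (k : ℝ) {t : ℝ} (ht : t ∈ Ioo 0 (2 * π)) :
    0 < volterra (volterra (cosMap k)) t ∨ 0 < volterra (volterra (cosMap (k + 1))) t := by
  rw [volterra_volterra_cosMap_pos_iff ht.1.ne', volterra_volterra_cosMap_pos_iff ht.1.ne']
  by_contra! h
  have hsin : sin (t / 2) = 0 := by
    rw [show t / 2 = (k + 1) * t / 2 - k * t / 2 by ring, sin_sub,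
      sin_eq_zero_of_sinc_eq_zero h.1, sin_eq_zero_of_sinc_eq_zero h.2, zero_mul, mul_zero,
      sub_zero]
  exact (sin_pos_of_pos_of_lt_pi (by linarith [ht.1]) (by linarith [ht.2])).ne' hsin

lemma volterra_eq_volterraConv_of_add_sq_smul_eq {k : ℝ} {x y : C(ℝ, ℝ)}
    (h : y + k ^ 2 • volterra (volterra y) = volterra (volterra x)) (t : ℝ) :
    volterra y t = volterraConv t (volterra (volterra (cosMap k))) x := by
  calc volterra y t = volterraConv t (cosMap k + k ^ 2 • volterra (volterra (cosMap k))) y := by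
        rw [cosMap_add_sq_smul_volterra_volterra, volterraConv_one]
    _ = volterraConv t (cosMap k) (y + k ^ 2 • volterra (volterra y)) := by
        simp only [map_add, map_smul, LinearMap.add_apply, LinearMap.smul_apply,
          volterraConv_volterra_right]
    _ = volterraConv t (volterra (volterra (cosMap k))) x := by
        rw [h, volterraConv_volterra_right, volterraConv_volterra_right]

end Oscillator

section WeightedJacobi

/-- The function `θ ↦ P_n^{(α-1/2,β-1/2)}(cos θ) sin(θ/2)^{2α} cos(θ/2)^{2β}` integrated in
`F_n^{(α,β),δ}`, for natural numbers `α` and `β`. -/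
noncomputable def weightedJacobi (n α β : ℕ) : C(ℝ, ℝ) where
  toFun θ := jacobiP n (α - 1 / 2) (β - 1 / 2) (cos θ) * sin (θ / 2) ^ (2 * α) *
    cos (θ / 2) ^ (2 * β)
  continuous_toFun := by
    unfold jacobiP
    fun_prop

lemma weightedJacobi_apply (n α β : ℕ) (θ : ℝ) :
    weightedJacobi n α β θ = jacobiP n (α - 1 / 2) (β - 1 / 2) (cos θ) * sin (θ / 2) ^ (2 * α) *
      cos (θ / 2) ^ (2 * β) := rfl

lemma neg_one_lt_natCast_sub_half (m : ℕ) : -1 < (m : ℝ) - 1 / 2 := by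
  linarith [m.cast_nonneg (α := ℝ)]

lemma weightedJacobi_succ_left (n α β : ℕ) :
    (2 * n + α + β + 1 : ℝ) • weightedJacobi n (α + 1) β =
      (n + α + 1 / 2 : ℝ) • weightedJacobi n α β - (n + 1 : ℝ) • weightedJacobi (n + 1) α β := by
  ext θ
  have h := one_sub_mul_jacobiP_add_one_left n (neg_one_lt_natCast_sub_half α)
    (neg_one_lt_natCast_sub_half β) (cos θ)
  rw [← sin_half_sq, sub_add_eq_add_sub] at h
  simp only [ContinuousMap.sub_apply, ContinuousMap.smul_apply, smul_eq_mul, weightedJacobi_apply,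
    Nat.cast_add, Nat.cast_one, mul_add_one, pow_add]
  linear_combination sin (θ / 2) ^ (2 * α) * cos (θ / 2) ^ (2 * β) * h

lemma weightedJacobi_succ_right (n α β : ℕ) :
    (2 * n + α + β + 1 : ℝ) • weightedJacobi n α (β + 1) =
      (n + β + 1 / 2 : ℝ) • weightedJacobi n α β + (n + 1 : ℝ) • weightedJacobi (n + 1) α β := by
  ext θ
  have h := one_add_mul_jacobiP_add_one_right n (neg_one_lt_natCast_sub_half α)
    (neg_one_lt_natCast_sub_half β) (cos θ)
  rw [← cos_half_sq, sub_add_eq_add_sub] at h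
  simp only [ContinuousMap.add_apply, ContinuousMap.smul_apply, smul_eq_mul, weightedJacobi_apply,
    Nat.cast_add, Nat.cast_one, mul_add_one, pow_add]
  linear_combination sin (θ / 2) ^ (2 * α) * cos (θ / 2) ^ (2 * β) * h

lemma weightedJacobi_zero_zero (n : ℕ) :
    weightedJacobi n 0 0 = genBinom (n - 1 / 2) n • cosMap n := by
  ext θ
  simpa [weightedJacobi_apply, cosMap_apply, neg_div] using jacobiP_neg_half_neg_half_cos n θ

lemma weightedJacobi_zero_zero_add_sq_smul (n : ℕ) :
    weightedJacobi n 0 0 + (n : ℝ) ^ 2 • volterra (volterra (weightedJacobi n 0 0)) =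
      genBinom (n - 1 / 2) n • 1 := by
  rw [weightedJacobi_zero_zero, ← cosMap_add_sq_smul_volterra_volterra n, map_smul, map_smul,
    smul_comm, smul_add]

-- The equation `f'' + n² f = (α + 1)(n + 1) g` with `f(0) = f'(0) = 0`, in integrated form so that
-- both sides can be computed from the contiguous relations alone.
lemma weightedJacobi_succ_zero_add_sq_smul (n α : ℕ) :
    weightedJacobi n (α + 1) 0 +
        (n : ℝ) ^ 2 • volterra (volterra (weightedJacobi n (α + 1) 0)) =
      volterra (volterra (((α + 1) * (n + 1) : ℝ) • weightedJacobi (n + 1) α 0)) := by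
  induction α generalizing n with
  | zero =>
    have hrec := weightedJacobi_succ_left n 0 0
    have hJrec := congrArg (fun x => volterra (volterra x)) hrec
    have hgen : (n + 1 / 2 : ℝ) * genBinom (n - 1 / 2) n =
        (n + 1) * genBinom ((n + 1 : ℕ) - 1 / 2) (n + 1 : ℕ) := by
      have h0 := DFunLike.congr_fun hrec 0
      refine sub_eq_zero.1 (Eq.symm ?_)
      simpa [weightedJacobi_zero_zero, weightedJacobi_apply n 1, cosMap_apply] using h0
    have hn := weightedJacobi_zero_zero_add_sq_smul n
    have hn1 := weightedJacobi_zero_zero_add_sq_smul (n + 1)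
    refine smul_right_injective _ (by positivity : (2 * n + 1 : ℝ) ≠ 0) ?_
    simp only [map_smul, map_sub] at hJrec ⊢
    push_cast at *
    linear_combination (norm := module) hrec + (n : ℝ) ^ 2 • hJrec + (n + 1 / 2 : ℝ) • hn -
      (n + 1 : ℝ) • hn1 + hgen • (1 : C(ℝ, ℝ))
  | succ α ih =>
    have hrec := weightedJacobi_succ_left n (α + 1) 0
    have hJrec := congrArg (fun x => volterra (volterra x)) hrec
    have hJrec' := congrArg (fun x => volterra (volterra x)) (weightedJacobi_succ_left (n + 1) α 0)
    have hn := ih n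
    have hn1 := ih (n + 1)
    refine smul_right_injective _ (by positivity : (2 * n + α + 2 : ℝ) ≠ 0) ?_
    simp only [map_smul, map_sub] at hJrec hJrec' hn hn1 ⊢
    push_cast at *
    linear_combination (norm := module) hrec + (n : ℝ) ^ 2 • hJrec + (n + α + 3 / 2 : ℝ) • hn -
      (n + 1 : ℝ) • hn1 - ((n + 1) * (α + 1) : ℝ) • hJrec'

lemma volterra_pow_weightedJacobi_succ_zero (n α : ℕ) (t : ℝ) :
    (volterra ^ (α + 3)) (weightedJacobi n (α + 1) 0) t =
      volterraConv t (volterra (volterra (cosMap n)))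
        (((α + 1) * (n + 1) : ℝ) • (volterra ^ (α + 2)) (weightedJacobi (n + 1) α 0)) := by
  have h := congrArg (volterra ^ (α + 2)) (weightedJacobi_succ_zero_add_sq_smul n α)
  simp only [map_add, map_smul, volterra_pow_volterra] at h
  rw [volterra_pow_succ_apply]
  refine volterra_eq_volterraConv_of_add_sq_smul_eq ?_ t
  simpa only [map_smul] using h

lemma volterra_pow_two_weightedJacobi_zero_zero (n : ℕ) (t : ℝ) :
    (volterra ^ 2) (weightedJacobi n 0 0) t =
      genBinom (n - 1 / 2) n * volterra (volterra (cosMap n)) t := by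
  rw [weightedJacobi_zero_zero, map_smul, pow_two]
  rfl

lemma genBinom_natCast_sub_half_pos (n : ℕ) : 0 < genBinom ((n : ℝ) - 1 / 2) n :=
  genBinom_pos (by linarith [neg_one_lt_natCast_sub_half n]) (by linarith)
    (neg_one_lt_natCast_sub_half n)

lemma volterra_pow_weightedJacobi_succ_zero_pos_of_ae {n α : ℕ}
    (h : ∀ᵐ t, 0 < t → 0 < (volterra ^ (α + 2)) (weightedJacobi (n + 1) α 0) t) {t : ℝ}
    (ht : 0 < t) : 0 < (volterra ^ (α + 3)) (weightedJacobi n (α + 1) 0) t := by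
  rw [volterra_pow_weightedJacobi_succ_zero, map_smul]
  exact mul_pos (by positivity) (volterraConv_pos (ae_volterra_volterra_cosMap_pos n) h ht)

lemma ae_volterra_pow_weightedJacobi_zero_pos (α n : ℕ) :
    ∀ᵐ t, 0 < t → 0 < (volterra ^ (α + 2)) (weightedJacobi n α 0) t := by
  induction α generalizing n with
  | zero =>
    filter_upwards [ae_volterra_volterra_cosMap_pos n] with t hcos ht
    rw [volterra_pow_two_weightedJacobi_zero_zero]
    exact mul_pos (genBinom_natCast_sub_half_pos n) (hcos ht)
  | succ α ih =>
    exact .of_forall fun t ht => volterra_pow_weightedJacobi_succ_zero_pos_of_ae (ih (n + 1)) ht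

lemma volterra_pow_weightedJacobi_succ_right_pos {m n α β : ℕ} {t : ℝ}
    (hn : 0 ≤ (volterra ^ m) (weightedJacobi n α β) t)
    (hn1 : 0 ≤ (volterra ^ m) (weightedJacobi (n + 1) α β) t)
    (hpos : 0 < (volterra ^ m) (weightedJacobi n α β) t ∨
      0 < (volterra ^ m) (weightedJacobi (n + 1) α β) t) :
    0 < (volterra ^ m) (weightedJacobi n α (β + 1)) t := by
  have hrec := congrArg (fun x => (volterra ^ m) x t) (weightedJacobi_succ_right n α β)
  simp only [map_smul, map_add, ContinuousMap.add_apply, ContinuousMap.smul_apply,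
    smul_eq_mul] at hrec
  refine pos_of_mul_pos_right (a := (2 * n + α + β + 1 : ℝ)) ?_ (by positivity)
  rw [hrec]
  rcases hpos with h | h <;> positivity

lemma volterra_pow_weightedJacobi_pos_of_forall {m α β : ℕ} {t : ℝ}
    (h : ∀ n, 0 < (volterra ^ m) (weightedJacobi n α β) t) (j n : ℕ) :
    0 < (volterra ^ m) (weightedJacobi n α (β + j)) t := by
  induction j generalizing n with
  | zero => exact h n
  | succ j ih =>
    exact volterra_pow_weightedJacobi_succ_right_pos (ih n).le (ih (n + 1)).le (.inl (ih n))

lemma volterra_pow_weightedJacobi_zero_one_pos (n : ℕ) {t : ℝ} (ht : t ∈ Ioo 0 (2 * π)) :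
    0 < (volterra ^ 2) (weightedJacobi n 0 1) t := by
  have hnonneg : ∀ k : ℕ, 0 ≤ (volterra ^ 2) (weightedJacobi k 0 0) t := fun k => by
    rw [volterra_pow_two_weightedJacobi_zero_zero]
    exact mul_nonneg (genBinom_natCast_sub_half_pos k).le (volterra_volterra_cosMap_nonneg _ _)
  refine volterra_pow_weightedJacobi_succ_right_pos (hnonneg n) (hnonneg (n + 1)) ?_
  simp only [volterra_pow_two_weightedJacobi_zero_zero,
    mul_pos_iff_of_pos_left (genBinom_natCast_sub_half_pos _)]
  rw [Nat.cast_succ]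
  exact volterra_volterra_cosMap_pos_or_add_one_pos n ht

theorem volterra_pow_weightedJacobi_pos {α β : ℕ} (n : ℕ) {t : ℝ} (ht : 0 < t)
    (h : 0 < α ∨ 0 < β ∧ t < 2 * π) : 0 < (volterra ^ (α + 2)) (weightedJacobi n α β) t := by
  rcases α.eq_zero_or_pos with rfl | hα
  · obtain ⟨hβ, htπ⟩ := h.resolve_left (lt_irrefl 0)
    obtain ⟨j, rfl⟩ := Nat.exists_eq_add_of_le hβ
    exact volterra_pow_weightedJacobi_pos_of_forall
      (fun k => volterra_pow_weightedJacobi_zero_one_pos k ⟨ht, htπ⟩) j n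
  · obtain ⟨a, rfl⟩ := Nat.exists_eq_succ_of_ne_zero hα.ne'
    simpa using volterra_pow_weightedJacobi_pos_of_forall
      (fun k => volterra_pow_weightedJacobi_succ_zero_pos_of_ae
        (ae_volterra_pow_weightedJacobi_zero_pos a (k + 1)) ht) β n

end WeightedJacobi

section FractionalIntegral

lemma intervalIntegrable_sub_rpow {r : ℝ} (hr : -1 < r) (t : ℝ) :
    IntervalIntegrable (fun θ => (t - θ) ^ r) volume 0 t := by
  simpa using (intervalIntegral.intervalIntegrable_rpow' (a := t) (b := 0) hr).comp_sub_left t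

lemma integral_sub_rpow_mul {γ t : ℝ} (hγ : 0 < γ) (ht : 0 ≤ t) (x : C(ℝ, ℝ)) :
    ∫ θ in (0 : ℝ)..t, (t - θ) ^ γ * x θ =
      γ * ∫ θ in (0 : ℝ)..t, (t - θ) ^ (γ - 1) * volterra x θ := by
  have hderiv : ∀ θ ∈ Ioo (min 0 t) (max 0 t),
      HasDerivAt (fun θ => (t - θ) ^ γ) (-(γ * (t - θ) ^ (γ - 1))) θ := fun θ hθ => by
    rw [min_eq_left ht, max_eq_right ht] at hθ
    simpa using ((hasDerivAt_id θ).const_sub t).rpow_const (p := γ) (.inl (sub_pos.2 hθ.2).ne')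
  have hparts := intervalIntegral.integral_mul_deriv_eq_deriv_mul_of_hasDerivAt
    (Continuous.rpow_const (by fun_prop) fun _ => .inr hγ.le).continuousOn
    (volterra x).continuous.continuousOn hderiv (fun θ _ => hasDerivAt_volterra x θ)
    ((intervalIntegrable_sub_rpow (by linarith) t).const_mul γ).neg
    (x.continuous.intervalIntegrable _ _)
  simpa [zero_rpow hγ.ne', volterra_apply_zero, mul_assoc] using hparts

lemma integral_sub_rpow_mul_pos {m : ℕ} {γ t : ℝ} (hγ : m ≤ γ) (ht : 0 < t) {x : C(ℝ, ℝ)}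
    (hx : ∀ s ∈ Ioc 0 t, 0 < (volterra ^ (m + 1)) x s) :
    0 < ∫ θ in (0 : ℝ)..t, (t - θ) ^ γ * x θ := by
  induction m generalizing γ x with
  | zero =>
    rw [Nat.cast_zero] at hγ
    rw [zero_add, pow_one] at hx
    rcases hγ.eq_or_lt with rfl | hγ
    · simpa [volterra_apply] using hx t (right_mem_Ioc.2 ht)
    · rw [integral_sub_rpow_mul hγ ht.le]
      refine mul_pos hγ (intervalIntegral.intervalIntegral_pos_of_pos_on
        ((intervalIntegrable_sub_rpow (by linarith) t).mul_continuousOn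
          (volterra x).continuous.continuousOn) (fun θ hθ => ?_) ht)
      exact mul_pos (rpow_pos_of_pos (sub_pos.2 hθ.2) _) (hx θ (Ioo_subset_Ioc_self hθ))
  | succ m ih =>
    push_cast at hγ
    have hγ0 : 0 < γ := by linarith [m.cast_nonneg (α := ℝ)]
    rw [integral_sub_rpow_mul hγ0 ht.le]
    refine mul_pos hγ0 (ih (by linarith) fun s hs => ?_)
    simpa only [pow_succ _ (m + 1), Module.End.mul_apply] using hx s hs

end FractionalIntegral

lemma FJ_natCast_eq_integral_weightedJacobi (n α β : ℕ) (δ t : ℝ) :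
    FJ n α β δ t = ∫ θ in (0 : ℝ)..t, (t - θ) ^ δ * weightedJacobi n α β θ := by
  refine intervalIntegral.integral_congr fun θ _ => ?_
  simp only [weightedJacobi_apply, ← rpow_natCast, mul_assoc, Nat.cast_mul, Nat.cast_ofNat]

theorem FJ_pos_of_nat_params_general (α β : ℕ) {t : ℝ} (ht : 0 < t)
    (h : 0 < α ∨ 0 < β ∧ t < 2 * π) {δ : ℝ} (hδ : (α : ℝ) + 1 ≤ δ) (n : ℕ) :
    0 < FJ n α β δ t := by
  rw [FJ_natCast_eq_integral_weightedJacobi]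
  refine integral_sub_rpow_mul_pos (m := α + 1) (mod_cast hδ) ht fun s hs => ?_
  exact volterra_pow_weightedJacobi_pos n hs.1 (h.imp_right (.imp_right hs.2.trans_lt))

theorem FJ_pos_of_nat_params (α β : ℕ) (hαβ : 0 < max α β) (δ : ℝ)
    (hδ : (α : ℝ) + 1 ≤ δ) (n : ℕ) (t : ℝ) (ht : t ∈ Set.Ioc (0:ℝ) π) :
    0 < FJ n (α : ℝ) (β : ℝ) δ t := by
  have htπ : t < 2 * π := by linarith [ht.2, pi_pos]
  exact FJ_pos_of_nat_params_general α β ht.1 ((lt_max_iff.1 hαβ).imp_right (⟨·, htπ⟩)) hδ n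
end

section
/- Let α, β be real numbers with α, β > -1/2, let n ∈ ℕ (n ≥ 0), let δ, σ be real numbers with 0 < δ < σ, and fix t ∈ (0, π]. If F_n^{(α,β),δ}(s) ≥ 0 for all s ∈ (0, t], then F_n^{(α,β),σ}(s) ≥ 0 for all s ∈ (0, t]. Moreover, if F_n^{(α,β),δ}(s) > 0 for all s ∈ (0, t], then F_n^{(α,β),σ}(s) > 0 for all s ∈ (0, t]. -/
open MeasureTheory Real Set

/-!
Up to the positive factor `Γ(δ + 1)`, `FJ n α β δ` is the Riemann–Liouville integral of order
`δ + 1` of the Jacobi polynomial times the Jacobi weight. By Fubini on the triangle `θ < u < s` and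
the Beta integral, these satisfy the semigroup law `I^q (I^p w) = I^(p + q) w`, so `FJ n α β σ s` is
a positive multiple of `∫ u in 0..s, (s - u) ^ (σ - δ - 1) * FJ n α β δ u`, whose kernel is
positive.
-/

section BetaKernel

theorem intervalIntegrable_sub_rpow_mul_sub_rpow {a b p q : ℝ} (hab : a < b) (hp : -1 < p)
    (hq : -1 < q) : IntervalIntegrable (fun x => (x - a) ^ p * (b - x) ^ q) volume a b := by
  obtain ⟨m, ham, hmb⟩ := exists_between hab
  have hleft : IntervalIntegrable (fun x => (x - a) ^ p) volume a m := by
    simpa using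
      (intervalIntegral.intervalIntegrable_rpow' (a := 0) (b := m - a) hp).comp_sub_right a
  have hright : IntervalIntegrable (fun x => (b - x) ^ q) volume m b := by
    simpa using
      (intervalIntegral.intervalIntegrable_rpow' (a := b - m) (b := 0) hq).comp_sub_left b
  refine (hleft.mul_continuousOn ?_).trans (hright.continuousOn_mul ?_)
  · refine ContinuousOn.rpow_const (by fun_prop) fun x hx => Or.inl ?_
    rw [uIcc_of_le ham.le] at hx
    exact (sub_pos.2 (hx.2.trans_lt hmb)).ne'
  · refine ContinuousOn.rpow_const (by fun_prop) fun x hx => Or.inl ?_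
    rw [uIcc_of_le hmb.le] at hx
    exact (sub_pos.2 (ham.trans_le hx.1)).ne'

theorem integral_sub_rpow_mul_sub_rpow {a b p q : ℝ} (hab : a < b) (hp : 0 < p) (hq : 0 < q) :
    ∫ x in a..b, (x - a) ^ (p - 1) * (b - x) ^ (q - 1) =
      Gamma p * Gamma q / Gamma (p + q) * (b - a) ^ (p + q - 1) := by
  have hba : 0 < b - a := sub_pos.2 hab
  have htranslate : ∫ x in a..b, (x - a) ^ (p - 1) * (b - x) ^ (q - 1) =
      ∫ y in (0 : ℝ)..(b - a), y ^ (p - 1) * (b - a - y) ^ (q - 1) := by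
    rw [← sub_self a, ← intervalIntegral.integral_comp_sub_right
      (fun y => y ^ (p - 1) * (b - a - y) ^ (q - 1))]
    simp only [sub_sub_sub_cancel_right]
  have hcomplex := Complex.betaIntegral_scaled p q hba
  rw [Complex.betaIntegral_eq_Gamma_mul_div _ _ (by simpa) (by simpa)] at hcomplex
  rw [htranslate, mul_comm]
  apply Complex.ofReal_injective
  rw [← intervalIntegral.integral_ofReal]
  push_cast [← Complex.Gamma_ofReal, Complex.ofReal_cpow hba.le]
  push_cast at hcomplex
  rw [← hcomplex]
  refine intervalIntegral.integral_congr fun y hy => ?_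
  rw [uIcc_of_le hba.le] at hy
  simp [Complex.ofReal_cpow hy.1, Complex.ofReal_cpow (sub_nonneg.2 hy.2)]

end BetaKernel

section Triangle

/-- The open triangle `a < θ < u < b` in the `(u, θ)`-plane, over which Dirichlet's formula
exchanges the order of integration. -/
def openTriangle (a b : ℝ) : Set (ℝ × ℝ) :=
  {z | a < z.2 ∧ z.2 < z.1 ∧ z.1 < b}

variable {a b : ℝ}

theorem measurableSet_openTriangle : MeasurableSet (openTriangle a b) :=
  (measurableSet_lt measurable_const measurable_snd).inter
    ((measurableSet_lt measurable_snd measurable_fst).inter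
      (measurableSet_lt measurable_fst measurable_const))

theorem indicator_openTriangle_fst {M : Type*} [Zero M] (f : ℝ × ℝ → M) (u : ℝ) :
    (fun θ => (openTriangle a b).indicator f (u, θ)) =
      (Iio b).indicator (fun u => (Ioo a u).indicator fun θ => f (u, θ)) u := by
  ext θ
  by_cases hu : u < b <;> simp [openTriangle, indicator, hu]

theorem indicator_openTriangle_snd {M : Type*} [Zero M] (f : ℝ × ℝ → M) (θ : ℝ) :
    (fun u => (openTriangle a b).indicator f (u, θ)) =
      (Ioi a).indicator (fun θ => (Ioo θ b).indicator fun u => f (u, θ)) θ := by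
  ext u
  by_cases hθ : a < θ <;> simp [openTriangle, indicator, hθ]

variable {E : Type*} [NormedAddCommGroup E] {f : ℝ × ℝ → E}

theorem integral_indicator_openTriangle_fst [NormedSpace ℝ E] (u : ℝ) :
    ∫ θ, (openTriangle a b).indicator f (u, θ) =
      (Ioo a b).indicator (fun u => ∫ θ in a..u, f (u, θ)) u := by
  rw [indicator_openTriangle_fst]
  by_cases hu : u ∈ Ioo a b
  · rw [indicator_of_mem (mem_Iio.2 hu.2), indicator_of_mem hu,
      integral_indicator measurableSet_Ioo, intervalIntegral.integral_of_le hu.1.le,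
      integral_Ioc_eq_integral_Ioo]
  · rw [indicator_of_notMem hu]
    by_cases hub : u < b
    · simp [indicator, hub, Ioo_eq_empty fun hau => hu ⟨hau, hub⟩]
    · simp [indicator, hub]

theorem integral_indicator_openTriangle_snd [NormedSpace ℝ E] (θ : ℝ) :
    ∫ u, (openTriangle a b).indicator f (u, θ) =
      (Ioo a b).indicator (fun θ => ∫ u in θ..b, f (u, θ)) θ := by
  rw [indicator_openTriangle_snd]
  by_cases hθ : θ ∈ Ioo a b
  · rw [indicator_of_mem (mem_Ioi.2 hθ.1), indicator_of_mem hθ,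
      integral_indicator measurableSet_Ioo, intervalIntegral.integral_of_le hθ.2.le,
      integral_Ioc_eq_integral_Ioo]
  · rw [indicator_of_notMem hθ]
    by_cases haθ : a < θ
    · simp [indicator, haθ, Ioo_eq_empty fun hθb => hθ ⟨haθ, hθb⟩]
    · simp [indicator, haθ]

theorem integrableOn_openTriangle_of_snd (hab : a ≤ b)
    (hf : AEStronglyMeasurable f (volume.restrict (openTriangle a b)))
    (hsection : ∀ θ ∈ Ioo a b, IntervalIntegrable (fun u => f (u, θ)) volume θ b)
    (hnorm : IntervalIntegrable (fun θ => ∫ u in θ..b, ‖f (u, θ)‖) volume a b) :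
    IntegrableOn f (openTriangle a b) := by
  rw [← integrable_indicator_iff measurableSet_openTriangle, Measure.volume_eq_prod,
    integrable_prod_iff' ((aestronglyMeasurable_indicator_iff measurableSet_openTriangle).2 hf)]
  constructor
  · refine .of_forall fun θ => ?_
    rw [indicator_openTriangle_snd]
    by_cases haθ : a < θ
    · rw [indicator_of_mem (mem_Ioi.2 haθ), integrable_indicator_iff measurableSet_Ioo]
      rcases lt_or_ge θ b with hθb | hbθ
      · exact (intervalIntegrable_iff_integrableOn_Ioo_of_le hθb.le).1 (hsection θ ⟨haθ, hθb⟩)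
      · simp [Ioo_eq_empty_of_le hbθ]
    · simp [indicator, haθ]
  · simp_rw [norm_indicator_eq_indicator_norm, integral_indicator_openTriangle_snd]
    rw [integrable_indicator_iff measurableSet_Ioo]
    exact (intervalIntegrable_iff_integrableOn_Ioo_of_le hab).1 hnorm

theorem intervalIntegrable_integral_of_integrableOn_openTriangle [NormedSpace ℝ E]
    (hab : a ≤ b) (hf : IntegrableOn f (openTriangle a b)) :
    IntervalIntegrable (fun u => ∫ θ in a..u, f (u, θ)) volume a b := by
  rw [← integrable_indicator_iff measurableSet_openTriangle, Measure.volume_eq_prod] at hf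
  rw [intervalIntegrable_iff_integrableOn_Ioo_of_le hab,
    ← integrable_indicator_iff measurableSet_Ioo]
  exact hf.integral_prod_left.congr (.of_forall integral_indicator_openTriangle_fst)

theorem integral_integral_swap_of_integrableOn_openTriangle [NormedSpace ℝ E]
    (hab : a ≤ b) (hf : IntegrableOn f (openTriangle a b)) :
    ∫ u in a..b, ∫ θ in a..u, f (u, θ) = ∫ θ in a..b, ∫ u in θ..b, f (u, θ) := by
  rw [← integrable_indicator_iff measurableSet_openTriangle, Measure.volume_eq_prod] at hf
  have hswap := integral_integral_swap (f := fun u θ => (openTriangle a b).indicator f (u, θ)) hf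
  simp_rw [integral_indicator_openTriangle_fst, integral_indicator_openTriangle_snd,
    integral_indicator measurableSet_Ioo, ← integral_Ioc_eq_integral_Ioo,
    ← intervalIntegral.integral_of_le hab] at hswap
  exact hswap

end Triangle

section RiemannLiouville

variable {E : Type*} [NormedAddCommGroup E] [NormedSpace ℝ E]

/-- The Riemann–Liouville fractional integral of order `p` of `w` with base point `a`. -/
noncomputable def rlIntegral (p a : ℝ) (w : ℝ → E) (s : ℝ) : E :=
  (Gamma p)⁻¹ • ∫ θ in a..s, (s - θ) ^ (p - 1) • w θ

variable {a s p q : ℝ} {w : ℝ → E}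

theorem aestronglyMeasurable_of_sub_rpow_smul
    (hw : AEStronglyMeasurable (fun θ => (s - θ) ^ p • w θ) (volume.restrict (Ioo a s))) :
    AEStronglyMeasurable w (volume.restrict (Ioo a s)) := by
  have hinv : Measurable fun θ : ℝ => ((s - θ) ^ p)⁻¹ := by fun_prop
  refine (hinv.aestronglyMeasurable.smul hw).congr ?_
  filter_upwards [ae_restrict_mem measurableSet_Ioo] with θ hθ
  exact inv_smul_smul₀ (rpow_pos_of_pos (sub_pos.2 hθ.2) p).ne' (w θ)

/-- The integrand of the iterated fractional integral of order `p`, then `q`, evaluated at `s`. -/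
noncomputable def iteratedRLKernel (p q s : ℝ) (w : ℝ → E) (z : ℝ × ℝ) : E :=
  ((z.1 - z.2) ^ (p - 1) * (s - z.1) ^ (q - 1)) • w z.2

theorem aestronglyMeasurable_iteratedRLKernel
    (hw : AEStronglyMeasurable w (volume.restrict (Ioo a s))) :
    AEStronglyMeasurable (iteratedRLKernel p q s w) (volume.restrict (openTriangle a s)) := by
  have hsnd : AEStronglyMeasurable (fun z : ℝ × ℝ => w z.2)
      (volume.restrict (openTriangle a s)) := by
    have hstrip : (volume : Measure ℝ).prod (volume.restrict (Ioo a s)) =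
        volume.restrict (univ ×ˢ Ioo a s) := by
      rw [Measure.volume_eq_prod, ← Measure.prod_restrict, Measure.restrict_univ]
    have hsubset : openTriangle a s ⊆ univ ×ˢ Ioo a s := fun z hz =>
      ⟨mem_univ _, hz.1, hz.2.1.trans hz.2.2⟩
    exact (hstrip ▸ hw.comp_snd (μ := volume)).mono_measure (Measure.restrict_mono hsubset le_rfl)
  have hkernel : Measurable fun z : ℝ × ℝ => (z.1 - z.2) ^ (p - 1) * (s - z.1) ^ (q - 1) := by
    fun_prop
  exact hkernel.aestronglyMeasurable.smul hsnd

theorem integral_norm_iteratedRLKernel (hp : 0 < p) (hq : 0 < q) {θ : ℝ} (hθ : θ < s) :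
    ∫ u in θ..s, ‖iteratedRLKernel p q s w (u, θ)‖ =
      Gamma p * Gamma q / Gamma (p + q) * ‖(s - θ) ^ (p + q - 1) • w θ‖ := by
  have hkernel : ∀ u ∈ Ioo θ s, ‖iteratedRLKernel p q s w (u, θ)‖ =
      (u - θ) ^ (p - 1) * (s - u) ^ (q - 1) * ‖w θ‖ := fun u hu => by
    have hu₁ := sub_pos.2 hu.1
    have hu₂ := sub_pos.2 hu.2
    rw [iteratedRLKernel, norm_smul, Real.norm_of_nonneg (by positivity)]
  rw [intervalIntegral.integral_congr_Ioo_of_le hθ.le hkernel,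
    intervalIntegral.integral_mul_const, integral_sub_rpow_mul_sub_rpow hθ hp hq, norm_smul,
    Real.norm_of_nonneg (rpow_nonneg (sub_nonneg.2 hθ.le) _), mul_assoc]

theorem integrableOn_iteratedRLKernel (hp : 0 < p) (hq : 0 < q) (has : a ≤ s)
    (hw : IntervalIntegrable (fun θ => (s - θ) ^ (p + q - 1) • w θ) volume a s) :
    IntegrableOn (iteratedRLKernel p q s w) (openTriangle a s) := by
  refine integrableOn_openTriangle_of_snd has ?_ (fun θ hθ => ?_) ?_
  · rw [intervalIntegrable_iff_integrableOn_Ioo_of_le has] at hw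
    exact aestronglyMeasurable_iteratedRLKernel
      (aestronglyMeasurable_of_sub_rpow_smul hw.aestronglyMeasurable)
  · have hkernel := intervalIntegrable_sub_rpow_mul_sub_rpow hθ.2
      (by linarith : -1 < p - 1) (by linarith : -1 < q - 1)
    exact ⟨hkernel.1.smul_const (w θ), hkernel.2.smul_const (w θ)⟩
  · refine (hw.norm.const_mul (Gamma p * Gamma q / Gamma (p + q))).congr_uIoo fun θ hθ => ?_
    rw [uIoo_of_le has] at hθ
    exact (integral_norm_iteratedRLKernel hp hq hθ.2).symm

theorem sub_rpow_smul_rlIntegral (u : ℝ) :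
    (s - u) ^ (q - 1) • rlIntegral p a w u =
      (Gamma p)⁻¹ • ∫ θ in a..u, iteratedRLKernel p q s w (u, θ) := by
  rw [rlIntegral, smul_comm, ← intervalIntegral.integral_smul]
  simp only [iteratedRLKernel, smul_smul, mul_comm]

theorem intervalIntegrable_sub_rpow_smul_rlIntegral (hp : 0 < p) (hq : 0 < q) (has : a ≤ s)
    (hw : IntervalIntegrable (fun θ => (s - θ) ^ (p + q - 1) • w θ) volume a s) :
    IntervalIntegrable (fun u => (s - u) ^ (q - 1) • rlIntegral p a w u) volume a s := by
  simp only [sub_rpow_smul_rlIntegral]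
  exact (intervalIntegrable_integral_of_integrableOn_openTriangle has
    (integrableOn_iteratedRLKernel hp hq has hw)).smul _

theorem rlIntegral_rlIntegral [CompleteSpace E] (hp : 0 < p) (hq : 0 < q) (has : a ≤ s)
    (hw : IntervalIntegrable (fun θ => (s - θ) ^ (p + q - 1) • w θ) volume a s) :
    rlIntegral q a (rlIntegral p a w) s = rlIntegral (p + q) a w s := by
  have hinner : ∀ θ ∈ Ioo a s, ∫ u in θ..s, iteratedRLKernel p q s w (u, θ) =
      (Gamma p * Gamma q / Gamma (p + q)) • (s - θ) ^ (p + q - 1) • w θ := fun θ hθ => by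
    simp only [iteratedRLKernel]
    rw [intervalIntegral.integral_smul_const, integral_sub_rpow_mul_sub_rpow hθ.2 hp hq, smul_smul]
  calc rlIntegral q a (rlIntegral p a w) s
      = (Gamma q)⁻¹ • (Gamma p)⁻¹ •
          ∫ u in a..s, ∫ θ in a..u, iteratedRLKernel p q s w (u, θ) := by
        rw [rlIntegral]
        simp only [sub_rpow_smul_rlIntegral, intervalIntegral.integral_smul]
    _ = (Gamma q)⁻¹ • (Gamma p)⁻¹ •
          ∫ θ in a..s, ∫ u in θ..s, iteratedRLKernel p q s w (u, θ) := by
        rw [integral_integral_swap_of_integrableOn_openTriangle has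
          (integrableOn_iteratedRLKernel hp hq has hw)]
    _ = (Gamma q)⁻¹ • (Gamma p)⁻¹ • (Gamma p * Gamma q / Gamma (p + q)) •
          ∫ θ in a..s, (s - θ) ^ (p + q - 1) • w θ := by
        rw [intervalIntegral.integral_congr_Ioo_of_le has hinner, intervalIntegral.integral_smul]
    _ = rlIntegral (p + q) a w s := by
        rw [rlIntegral, smul_smul, smul_smul]
        have hΓp := (Gamma_pos_of_pos hp).ne'
        have hΓq := (Gamma_pos_of_pos hq).ne'
        congr 1
        field_simp

theorem rlIntegral_nonneg {w : ℝ → ℝ} (hp : 0 < p) (has : a ≤ s) (hw : ∀ θ ∈ Ioo a s, 0 ≤ w θ) :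
    0 ≤ rlIntegral p a w s := by
  refine smul_nonneg (inv_nonneg.2 (Gamma_pos_of_pos hp).le) ?_
  rw [intervalIntegral.integral_of_le has, integral_Ioc_eq_integral_Ioo]
  exact setIntegral_nonneg measurableSet_Ioo fun θ hθ =>
    smul_nonneg (rpow_nonneg (sub_nonneg.2 hθ.2.le) _) (hw θ hθ)

theorem rlIntegral_pos {w : ℝ → ℝ} (hp : 0 < p) (has : a < s) (hw : ∀ θ ∈ Ioo a s, 0 < w θ)
    (hintegrable : IntervalIntegrable (fun θ => (s - θ) ^ (p - 1) • w θ) volume a s) :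
    0 < rlIntegral p a w s :=
  smul_pos (inv_pos.2 (Gamma_pos_of_pos hp)) <|
    intervalIntegral.intervalIntegral_pos_of_pos_on hintegrable
      (fun θ hθ => smul_pos (rpow_pos_of_pos (sub_pos.2 hθ.2) _) (hw θ hθ)) has

theorem rlIntegral_nonneg_of_lt {w : ℝ → ℝ} (hp : 0 < p) (hpq : p < q) (has : a ≤ s)
    (hw : IntervalIntegrable (fun θ => (s - θ) ^ (q - 1) • w θ) volume a s)
    (h : ∀ u ∈ Ioo a s, 0 ≤ rlIntegral p a w u) : 0 ≤ rlIntegral q a w s := by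
  obtain ⟨r, hr, rfl⟩ : ∃ r, 0 < r ∧ q = p + r := ⟨q - p, sub_pos.2 hpq, by ring⟩
  rw [← rlIntegral_rlIntegral hp hr has hw]
  exact rlIntegral_nonneg hr has h

theorem rlIntegral_pos_of_lt {w : ℝ → ℝ} (hp : 0 < p) (hpq : p < q) (has : a < s)
    (hw : IntervalIntegrable (fun θ => (s - θ) ^ (q - 1) • w θ) volume a s)
    (h : ∀ u ∈ Ioo a s, 0 < rlIntegral p a w u) : 0 < rlIntegral q a w s := by
  obtain ⟨r, hr, rfl⟩ : ∃ r, 0 < r ∧ q = p + r := ⟨q - p, sub_pos.2 hpq, by ring⟩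
  rw [← rlIntegral_rlIntegral hp hr has.le hw]
  exact rlIntegral_pos hr has h (intervalIntegrable_sub_rpow_smul_rlIntegral hp hr has.le hw)

end RiemannLiouville

section Jacobi

theorem sinc_pos_of_mem_Ioo {x : ℝ} (hx : x ∈ Ioo (-π) π) : 0 < sinc x := by
  rcases lt_trichotomy x 0 with hneg | rfl | hpos
  · rw [sinc_of_ne_zero hneg.ne]
    exact div_pos_of_neg_of_neg (sin_neg_of_neg_of_neg_pi_lt hneg hx.1) hneg
  · simp
  · rw [sinc_of_ne_zero hpos.ne']
    exact div_pos (sin_pos_of_pos_of_lt_pi hpos hx.2) hpos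

theorem sinc_half_pos {θ : ℝ} (hθ : θ ∈ Icc 0 π) : 0 < sinc (θ / 2) :=
  sinc_pos_of_mem_Ioo ⟨by linarith [hθ.1, pi_pos], by linarith [hθ.2, pi_pos]⟩

theorem sin_half_rpow {θ : ℝ} (hθ : θ ∈ Icc 0 π) (r : ℝ) :
    sin (θ / 2) ^ r = θ ^ r * (sinc (θ / 2) / 2) ^ r := by
  rw [← mul_rpow hθ.1 (half_pos (sinc_half_pos hθ)).le]
  rcases eq_or_ne θ 0 with rfl | hne
  · simp
  · rw [sinc_of_ne_zero (by positivity)]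
    field_simp

theorem cos_half_rpow {θ : ℝ} (hθ : θ ∈ Icc 0 π) (r : ℝ) :
    cos (θ / 2) ^ r = (π - θ) ^ r * (sinc ((π - θ) / 2) / 2) ^ r := by
  rw [← sin_half_rpow ⟨sub_nonneg.2 hθ.2, by linarith [hθ.1]⟩, sub_div, sin_pi_div_two_sub]

theorem continuousOn_sinc_half_rpow (r : ℝ) :
    ContinuousOn (fun θ => (sinc (θ / 2) / 2) ^ r) (Icc 0 π) :=
  ContinuousOn.rpow_const
    ((continuous_sinc.comp (continuous_id.div_const 2)).div_const 2).continuousOn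
    fun _ hθ => Or.inl (half_pos (sinc_half_pos hθ)).ne'

theorem continuous_jacobiP (n : ℕ) (a b : ℝ) : Continuous (jacobiP n a b) := by
  unfold jacobiP
  fun_prop

/-- The function whose Riemann–Liouville integrals with base point `0` are, up to a positive
factor, the `FJ n α β δ`: the Jacobi polynomial times the Jacobi weight in the angular variable. -/
noncomputable def jacobiDensity (n : ℕ) (α β θ : ℝ) : ℝ :=
  jacobiP n (α - 1/2) (β - 1/2) (cos θ) * sin (θ / 2) ^ (2 * α) * cos (θ / 2) ^ (2 * β)

variable (n : ℕ) (α β : ℝ)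

theorem exists_continuousOn_jacobiDensity_eq : ∃ h : ℝ → ℝ, ContinuousOn h (Icc 0 π) ∧
    ∀ θ ∈ Icc 0 π, jacobiDensity n α β θ = θ ^ (2 * α) * (π - θ) ^ (2 * β) * h θ := by
  refine ⟨fun θ => jacobiP n (α - 1/2) (β - 1/2) (cos θ) *
    ((sinc (θ / 2) / 2) ^ (2 * α) * (sinc ((π - θ) / 2) / 2) ^ (2 * β)), ?_, fun θ hθ => ?_⟩
  · have hreflect : MapsTo (fun θ => π - θ) (Icc 0 π) (Icc 0 π) := fun θ hθ =>
      ⟨sub_nonneg.2 hθ.2, by linarith [hθ.1]⟩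
    exact ((continuous_jacobiP n _ _).comp continuous_cos).continuousOn.mul
      ((continuousOn_sinc_half_rpow _).mul
        ((continuousOn_sinc_half_rpow _).comp (by fun_prop) hreflect))
  · rw [jacobiDensity, sin_half_rpow hθ, cos_half_rpow hθ]
    ring

/- At `s = π` the singularities of `(s - θ) ^ σ` and of `cos (θ / 2) ^ (2 * β)` coincide, so
their exponents add up. -/
theorem intervalIntegrable_sub_rpow_mul_jacobiDensity {σ s : ℝ} (hα : -1 / 2 < α) (hσ : -1 < σ)
    (hs : 0 < s) (hsπ : s ≤ π) (hσβ : s = π → -1 < σ + 2 * β) :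
    IntervalIntegrable (fun θ => (s - θ) ^ σ * jacobiDensity n α β θ) volume 0 s := by
  obtain ⟨h, hcont, heq⟩ := exists_continuousOn_jacobiDensity_eq n α β
  have hsub : Icc 0 s ⊆ Icc 0 π := Icc_subset_Icc_right hsπ
  rw [← uIcc_of_le hs.le] at hsub
  have hsingular : IntervalIntegrable (fun θ => θ ^ (2 * α) * ((s - θ) ^ σ * (π - θ) ^ (2 * β)))
      volume 0 s := by
    rcases hsπ.lt_or_eq with hlt | rfl
    · have hfar : ContinuousOn (fun θ => (π - θ) ^ (2 * β)) (uIcc 0 s) :=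
        ContinuousOn.rpow_const (by fun_prop) fun θ hθ => Or.inl <| by
          rw [uIcc_of_le hs.le] at hθ
          exact (sub_pos.2 (hθ.2.trans_lt hlt)).ne'
      simpa only [sub_zero, mul_assoc] using (intervalIntegrable_sub_rpow_mul_sub_rpow hs
        (by linarith : -1 < 2 * α) hσ).mul_continuousOn hfar
    · refine (intervalIntegrable_sub_rpow_mul_sub_rpow hs (by linarith : -1 < 2 * α)
        (hσβ rfl)).congr_uIoo fun θ hθ => ?_
      rw [uIoo_of_le hs.le] at hθ
      simp only [sub_zero, rpow_add (sub_pos.2 hθ.2)]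
  refine (hsingular.mul_continuousOn (hcont.mono hsub)).congr fun θ hθ => ?_
  rw [heq θ (hsub (uIoc_subset_uIcc hθ))]
  ring

theorem FJ_eq_Gamma_mul_rlIntegral {δ : ℝ} (hδ : -1 < δ) (s : ℝ) :
    FJ n α β δ s = Gamma (δ + 1) * rlIntegral (δ + 1) 0 (jacobiDensity n α β) s := by
  have hΓ : Gamma (δ + 1) ≠ 0 := (Gamma_pos_of_pos (by linarith)).ne'
  simp only [rlIntegral, smul_eq_mul, add_sub_cancel_right, mul_inv_cancel_left₀ hΓ, FJ,
    jacobiDensity, mul_assoc]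

end Jacobi

theorem FJ_monotone_in_delta_general {α δ σ t : ℝ} (β : ℝ) (n : ℕ) (hα : -1 / 2 < α) (hδ : -1 < δ)
    (hδσ : δ < σ) (ht : t ≤ π) (hσβ : t = π → -1 < σ + 2 * β) :
    ((∀ s ∈ Ioo 0 t, 0 ≤ FJ n α β δ s) → ∀ s ∈ Ioc 0 t, 0 ≤ FJ n α β σ s) ∧
    ((∀ s ∈ Ioo 0 t, 0 < FJ n α β δ s) → ∀ s ∈ Ioc 0 t, 0 < FJ n α β σ s) := by
  have hσ : -1 < σ := hδ.trans hδσ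
  have hδ' : 0 < δ + 1 := by linarith
  have hδσ' : δ + 1 < σ + 1 := by linarith
  have hintegrable : ∀ s ∈ Ioc 0 t, IntervalIntegrable
      (fun θ => (s - θ) ^ (σ + 1 - 1) • jacobiDensity n α β θ) volume 0 s := fun s hs => by
    simpa using intervalIntegrable_sub_rpow_mul_jacobiDensity n α β hα hσ hs.1 (hs.2.trans ht)
      fun hsπ => hσβ (ht.antisymm (hsπ ▸ hs.2))
  have hsub : ∀ s ∈ Ioc 0 t, Ioo 0 s ⊆ Ioo 0 t := fun s hs => Ioo_subset_Ioo_right hs.2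
  simp only [FJ_eq_Gamma_mul_rlIntegral n α β hδ, FJ_eq_Gamma_mul_rlIntegral n α β hσ,
    mul_nonneg_iff_of_pos_left (Gamma_pos_of_pos hδ'),
    mul_pos_iff_of_pos_left (Gamma_pos_of_pos hδ'),
    mul_nonneg_iff_of_pos_left (Gamma_pos_of_pos (hδ'.trans hδσ')),
    mul_pos_iff_of_pos_left (Gamma_pos_of_pos (hδ'.trans hδσ'))]
  exact ⟨fun h s hs => rlIntegral_nonneg_of_lt hδ' hδσ' hs.1.le (hintegrable s hs)
      fun u hu => h u (hsub s hs hu),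
    fun h s hs => rlIntegral_pos_of_lt hδ' hδσ' hs.1 (hintegrable s hs)
      fun u hu => h u (hsub s hs hu)⟩

theorem FJ_monotone_in_delta (α β : ℝ) (hα : -1/2 < α) (hβ : -1/2 < β) (n : ℕ)
    (δ σ : ℝ) (hδ : 0 < δ) (hδσ : δ < σ) (t : ℝ) (ht : t ∈ Set.Ioc (0:ℝ) π) :
    ((∀ s ∈ Set.Ioc (0:ℝ) t, 0 ≤ FJ n α β δ s) →
      ∀ s ∈ Set.Ioc (0:ℝ) t, 0 ≤ FJ n α β σ s) ∧
    ((∀ s ∈ Set.Ioc (0:ℝ) t, 0 < FJ n α β δ s) →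
      ∀ s ∈ Set.Ioc (0:ℝ) t, 0 < FJ n α β σ s) := by
  have hgeneral := FJ_monotone_in_delta_general β n hα (by linarith) hδσ ht.2
    fun _ => by linarith
  exact ⟨fun h => hgeneral.1 fun s hs => h s (Ioo_subset_Ioc_self hs),
    fun h => hgeneral.2 fun s hs => h s (Ioo_subset_Ioc_self hs)⟩
end
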